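/- Completeness of the implicational propositional calculus: assume the set of well-formed formulas is countable. Every tautology of IPC is a theorem of IPC; equivalently, if a wf Q is not a theorem of IPC then there exists a valuation v with v(Q) = 0. -/

import Mathlib

/-- Well-formed formulas of the implicational propositional calculus:
propositional variables (indexed by ℕ, so the set of wfs is countable)
and the single connective ⊃. -/
inductive Wf where
  | var : ℕ → Wf
  | imp : Wf → Wf → Wf
deriving DecidableEq

infixr:60 " ⊃' " => Wf.imp

/-- `Deduces Γ A` : `A` is deducible from the set `Γ` of extra axioms/hypotheses,
using the three axiom schemes of IPC (including the Peirce scheme) and modus ponens.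
Theorems of IPC are `Deduces ∅ A`; for an extension `M` of IPC with extra-axiom
set `E`, `T(M)` is `Deduces E`, and deducibility from hypotheses `Γ` in `M` is
`Deduces (E ∪ Γ)`. -/
inductive Deduces : Set Wf → Wf → Prop where
  | hyp : ∀ {Γ : Set Wf} {A : Wf}, A ∈ Γ → Deduces Γ A
  | ax1 : ∀ {Γ : Set Wf} (A B : Wf), Deduces Γ (A ⊃' (B ⊃' A))
  | ax2 : ∀ {Γ : Set Wf} (A B C : Wf),
      Deduces Γ ((A ⊃' (B ⊃' C)) ⊃' ((A ⊃' B) ⊃' (A ⊃' C)))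
  | peirce : ∀ {Γ : Set Wf} (A B : Wf), Deduces Γ (((A ⊃' B) ⊃' A) ⊃' A)
  | mp : ∀ {Γ : Set Wf} {A B : Wf}, Deduces Γ (A ⊃' B) → Deduces Γ A → Deduces Γ B

/-- A valuation is a map v from wfs to {0,1} with v(A ⊃ B) = 0 precisely when
v(A) = 1 and v(B) = 0. -/
def IsValuation (v : Wf → ℕ) : Prop :=
  (∀ A : Wf, v A = 0 ∨ v A = 1) ∧
  (∀ A B : Wf, v (A ⊃' B) = 0 ↔ (v A = 1 ∧ v B = 0))

/-!
There is no falsity constant, so maximal consistent sets are replaced by maximality relative to the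
target: by Zorn, a set not deducing `Q` extends to a maximal such set `M`. For every `A ∉ M` the
deduction theorem gives `M ⊢ A ⊃ Q`. If neither `A` nor `A ⊃ B` were in `M`, then both would imply
`Q`, and Peirce's law would yield `M ⊢ Q`. Hence `M` treats `⊃` as the truth table does, and its
indicator function is a valuation which is `1` on the original set and `0` at `Q`.
-/

namespace Deduces

variable {Γ Δ : Set Wf} {A B C Q : Wf}

theorem mono (hΓΔ : Γ ⊆ Δ) (h : Deduces Γ A) : Deduces Δ A := by
  induction h with
  | hyp hA => exact hyp (hΓΔ hA)
  | ax1 A B => exact ax1 A B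
  | ax2 A B C => exact ax2 A B C
  | peirce A B => exact peirce A B
  | mp _ _ ihAB ihA => exact mp ihAB ihA

theorem imp_intro (A : Wf) (h : Deduces Γ B) : Deduces Γ (A ⊃' B) :=
  mp (ax1 B A) h

theorem imp_mp (hABC : Deduces Γ (A ⊃' B ⊃' C)) (hAB : Deduces Γ (A ⊃' B)) :
    Deduces Γ (A ⊃' C) :=
  mp (mp (ax2 A B C) hABC) hAB

theorem imp_self (Γ : Set Wf) (A : Wf) : Deduces Γ (A ⊃' A) :=
  imp_mp (ax1 A (A ⊃' A)) (ax1 A A)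

theorem imp_trans (hAB : Deduces Γ (A ⊃' B)) (hBC : Deduces Γ (B ⊃' C)) : Deduces Γ (A ⊃' C) :=
  imp_mp (hBC.imp_intro A) hAB

theorem imp_of_insert (h : Deduces (insert A Γ) B) : Deduces Γ (A ⊃' B) := by
  generalize hΔ : insert A Γ = Δ at h
  induction h with
  | hyp hB =>
    subst hΔ
    rcases hB with rfl | hB
    · exact imp_self Γ _
    · exact (hyp hB).imp_intro A
  | ax1 B C => exact (ax1 B C).imp_intro A
  | ax2 B C D => exact (ax2 B C D).imp_intro A
  | peirce B C => exact (peirce B C).imp_intro A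
  | mp _ _ ihBC ihB => exact imp_mp ihBC ihB

-- `A ⊃ B` plays the role of the negation of `A` in a case distinction; from the hypothesis `Q ⊃ B`
-- one gets `A ⊃ B` through `Q`, hence `Q`, and Peirce's law discharges that hypothesis.
theorem of_imp_of_imp_imp (hA : Deduces Γ (A ⊃' Q)) (hAB : Deduces Γ ((A ⊃' B) ⊃' Q)) :
    Deduces Γ Q := by
  have hΓ : Γ ⊆ insert (Q ⊃' B) Γ := Set.subset_insert _ Γ
  have hQB : Deduces (insert (Q ⊃' B) Γ) (Q ⊃' B) := hyp (Set.mem_insert _ Γ)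
  have hQ : Deduces (insert (Q ⊃' B) Γ) Q := mp (hAB.mono hΓ) ((hA.mono hΓ).imp_trans hQB)
  exact mp (peirce Q B) hQ.imp_of_insert

theorem exists_mem_of_sUnion {c : Set (Set Wf)} (hne : c.Nonempty) (hc : DirectedOn (· ⊆ ·) c)
    (h : Deduces (⋃₀ c) A) : ∃ Γ ∈ c, Deduces Γ A := by
  generalize hΔ : ⋃₀ c = Δ at h
  obtain ⟨Γ₀, hΓ₀⟩ := hne
  induction h with
  | hyp hA =>
    subst hΔ
    obtain ⟨Γ, hΓ, hA⟩ := hA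
    exact ⟨Γ, hΓ, hyp hA⟩
  | ax1 A B => exact ⟨Γ₀, hΓ₀, ax1 A B⟩
  | ax2 A B C => exact ⟨Γ₀, hΓ₀, ax2 A B C⟩
  | peirce A B => exact ⟨Γ₀, hΓ₀, peirce A B⟩
  | mp _ _ ihAB ihA =>
    obtain ⟨Γ₁, hΓ₁, hAB⟩ := ihAB
    obtain ⟨Γ₂, hΓ₂, hA⟩ := ihA
    obtain ⟨Γ, hΓ, h₁, h₂⟩ := hc Γ₁ hΓ₁ Γ₂ hΓ₂
    exact ⟨Γ, hΓ, mp (hAB.mono h₁) (hA.mono h₂)⟩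

end Deduces

/-- `M` is maximal among the sets of wfs from which `Q` is not deducible. This is the substitute for
a maximal consistent set in a language without a falsity constant. -/
def IsMaximalAvoiding (Q : Wf) (M : Set Wf) : Prop :=
  Maximal (fun Γ => ¬ Deduces Γ Q) M

theorem exists_isMaximalAvoiding_superset {Γ : Set Wf} {Q : Wf} (h : ¬ Deduces Γ Q) :
    ∃ M, Γ ⊆ M ∧ IsMaximalAvoiding Q M := by
  refine zorn_subset_nonempty {Δ | ¬ Deduces Δ Q} (fun c hcQ hc hne => ?_) Γ h
  refine ⟨⋃₀ c, fun hQ => ?_, fun Δ hΔ => Set.subset_sUnion_of_mem hΔ⟩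
  obtain ⟨Δ, hΔ, hΔQ⟩ := hQ.exists_mem_of_sUnion hne hc.directedOn
  exact hcQ hΔ hΔQ

namespace IsMaximalAvoiding

variable {M : Set Wf} {A B Q : Wf}

theorem notMem (hM : IsMaximalAvoiding Q M) : Q ∉ M :=
  fun hQ => hM.prop (.hyp hQ)

theorem deduces_imp_of_notMem (hM : IsMaximalAvoiding Q M) (hA : A ∉ M) : Deduces M (A ⊃' Q) := by
  by_contra hAQ
  have hins : ¬ Deduces (insert A M) Q := fun h => hAQ h.imp_of_insert
  exact hA (hM.mem_of_prop_insert hins)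

theorem mem_of_deduces (hM : IsMaximalAvoiding Q M) (h : Deduces M A) : A ∈ M := by
  by_contra hA
  exact hM.prop (.mp (hM.deduces_imp_of_notMem hA) h)

theorem imp_mem_iff (hM : IsMaximalAvoiding Q M) : (A ⊃' B) ∈ M ↔ (A ∈ M → B ∈ M) := by
  refine ⟨fun hAB hA => hM.mem_of_deduces (.mp (.hyp hAB) (.hyp hA)), fun h => ?_⟩
  by_contra hAB
  have hA : A ∉ M := fun hA => hAB (hM.mem_of_deduces ((Deduces.hyp (h hA)).imp_intro A))
  exact hM.prop
    ((hM.deduces_imp_of_notMem hA).of_imp_of_imp_imp (hM.deduces_imp_of_notMem hAB))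

end IsMaximalAvoiding

theorem isValuation_indicator_iff {M : Set Wf} :
    IsValuation (M.indicator 1) ↔ ∀ A B, (A ⊃' B) ∈ M ↔ (A ∈ M → B ∈ M) := by
  classical
  have hzero (A : Wf) : M.indicator (1 : Wf → ℕ) A = 0 ↔ A ∉ M := by simp
  have hone (A : Wf) : M.indicator (1 : Wf → ℕ) A = 1 ↔ A ∈ M := by simp [Set.indicator_apply]
  simp only [IsValuation, hzero, hone]
  grind

theorem stmt_14_general (Γ : Set Wf) :
    (∀ Q : Wf, (∀ v : Wf → ℕ, IsValuation v → (∀ A ∈ Γ, v A = 1) → v Q = 1) → Deduces Γ Q) ∧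
    (∀ Q : Wf, ¬ Deduces Γ Q →
      ∃ v : Wf → ℕ, IsValuation v ∧ (∀ A ∈ Γ, v A = 1) ∧ v Q = 0) := by
  have countermodel (Q : Wf) (hQ : ¬ Deduces Γ Q) :
      ∃ v : Wf → ℕ, IsValuation v ∧ (∀ A ∈ Γ, v A = 1) ∧ v Q = 0 := by
    obtain ⟨M, hΓM, hM⟩ := exists_isMaximalAvoiding_superset hQ
    exact ⟨M.indicator 1, isValuation_indicator_iff.2 fun _ _ => hM.imp_mem_iff,
      fun A hA => Set.indicator_of_mem (hΓM hA) 1, Set.indicator_of_notMem hM.notMem 1⟩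
  refine ⟨fun Q hQ => ?_, countermodel⟩
  by_contra hΓQ
  obtain ⟨v, hv, hvΓ, hvQ⟩ := countermodel Q hΓQ
  exact zero_ne_one (hvQ.symm.trans (hQ v hv hvΓ))

/-- Completeness of IPC: every tautology is a theorem; equivalently, if a wf Q
is not a theorem of IPC then some valuation v has v(Q) = 0.  (The set of wfs is
countable since variables are indexed by ℕ.) -/
theorem stmt_14 :
    (∀ Q : Wf, (∀ v : Wf → ℕ, IsValuation v → v Q = 1) → Deduces ∅ Q) ∧
    (∀ Q : Wf, ¬ Deduces ∅ Q → ∃ v : Wf → ℕ, IsValuation v ∧ v Q = 0) := by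
  simpa using stmt_14_general ∅
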